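/- Let f : ℕ → ℕ be any function satisfying f(0) = 0, f(1) = 0, and for every n ∈ ℕ, either f(n+2) = 1 + f(n+1) or f(n+2) = 1 + f(n). Then for all n ∈ ℕ, n ≤ 2·f(n) + 1 and f(n) ≤ n; that is, (n−1)/2 ≤ f(n) ≤ n. -/

import Mathlib

/-- Two-region summary for the procedure differ: (n−1)/2 ≤ f(n) ≤ n,
stated as n ≤ 2·f(n) + 1 and f(n) ≤ n. -/
theorem stmt_10 (f : ℕ → ℕ) (h0 : f 0 = 0) (h1 : f 1 = 0)
    (hrec : ∀ n, f (n + 2) = 1 + f (n + 1) ∨ f (n + 2) = 1 + f n) :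
    ∀ n, n ≤ 2 * f n + 1 ∧ f n ≤ n := by
  intro n
  induction n using Nat.twoStepInduction with
  | zero => omega
  | one => omega
  | more n ih ih' =>
    rcases hrec n with h | h <;> omega
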